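/- arXiv:1601.01650 — 2 statements merged into one kernel-verified Lean document; each statement's English description precedes it below -/
import Mathlib

section
/- For all real α, β > −1, every j ∈ ℕ, every sequence (M_n) of nonnegative reals, and every n ≥ 1, the polynomial Q_n is orthogonal to every polynomial of degree at most n−1 with respect to the varying Sobolev inner product: (Q_n, p)_{S,n} = 0 for every real polynomial p with deg p ≤ n−1. -/
open Polynomial Filter

/-- The Jacobi polynomial `P_n^{(α,β)}` as a real polynomial. -/
noncomputable def jacobiP (α β : ℝ) (n : ℕ) : Polynomial ℝ :=
  ∑ k ∈ Finset.range (n + 1),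
    Polynomial.C (Real.Gamma (n + α + 1) / (Real.Gamma ((n : ℝ) - k + 1) * Real.Gamma (α + k + 1)) *
        (Real.Gamma (n + β + 1) / (Real.Gamma ((k : ℝ) + 1) * Real.Gamma ((n : ℝ) - k + β + 1)))) *
      (Polynomial.C (2⁻¹ : ℝ) * (Polynomial.X - 1)) ^ k *
      (Polynomial.C (2⁻¹ : ℝ) * (Polynomial.X + 1)) ^ (n - k)

/-- The squared Jacobi norm `‖P_n^{(α,β)}‖²`. -/
noncomputable def jacobiNormSq (α β : ℝ) (n : ℕ) : ℝ :=
  ∫ x in (-1 : ℝ)..1, (jacobiP α β n).eval x ^ 2 * (1 - x) ^ α * (1 + x) ^ β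

/-- The kernel `K_n^{(j,k)}(x,y)`. -/
noncomputable def kernK (α β : ℝ) (j k n : ℕ) (x y : ℝ) : ℝ :=
  ∑ i ∈ Finset.range (n + 1),
    (Polynomial.derivative^[j] (jacobiP α β i)).eval x *
      (Polynomial.derivative^[k] (jacobiP α β i)).eval y / jacobiNormSq α β i

/-- The kernel `K_n^{(j,0)}(1,·)` as a polynomial. -/
noncomputable def kernKPoly (α β : ℝ) (j n : ℕ) : Polynomial ℝ :=
  ∑ i ∈ Finset.range (n + 1),
    Polynomial.C ((Polynomial.derivative^[j] (jacobiP α β i)).eval 1 / jacobiNormSq α β i) *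
      jacobiP α β i

/-- The varying Sobolev inner product `(f,g)_{S,n}` with mass `m`. -/
noncomputable def sobInner (α β : ℝ) (j : ℕ) (m : ℝ) (f g : Polynomial ℝ) : ℝ :=
  (∫ x in (-1 : ℝ)..1, f.eval x * g.eval x * (1 - x) ^ α * (1 + x) ^ β) +
    m * (Polynomial.derivative^[j] f).eval 1 * (Polynomial.derivative^[j] g).eval 1

/-- The Jacobi–Sobolev orthogonal polynomial `Q_n`. -/
noncomputable def sobQ (α β : ℝ) (j : ℕ) (Ms : ℕ → ℝ) (n : ℕ) : Polynomial ℝ :=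
  jacobiP α β n -
    Polynomial.C (Ms n * (Polynomial.derivative^[j] (jacobiP α β n)).eval 1 /
        (1 + Ms n * kernK α β j j (n - 1) 1 1)) *
      kernKPoly α β j (n - 1)

/-!
Let `φ p = p⁽ʲ⁾(1)`, let `L` be the inner product of the Jacobi weight and
`k = K_{n-1}^{(j,0)}(1, ·)`, so that the Sobolev inner product is `L(f, g) + M φ(f) φ(g)`. In degree
`< n` the kernel reproduces `φ`, i.e. `L(k, p) = φ(p)`, while `L(P_n, p) = 0`; subtracting
`M φ(P_n) / (1 + M φ(k)) • k` from `P_n` is exactly what cancels the rank-one term.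

The orthogonality of the Jacobi polynomials comes from the Beta integral: expanding `P_n` in powers
of `X - 1` and `X + 1`, pairing it with `(X + 1)^m` gives, up to a constant, the `n`-th finite
difference of a polynomial of degree `m`, which vanishes for `m < n`.
-/

open MeasureTheory Set

section BilinearForms

variable {ι K V : Type*} [Field K] [AddCommGroup V] [Module K V]

/-- The Fourier expansion `∑ φ(eᵢ) / B(eᵢ, eᵢ) • eᵢ` of a linear functional `φ` along a finite part
of a family of vectors. For a `B`-orthogonal family it represents `φ` on the span, so this is the
abstract form of a reproducing kernel. -/
def fourierRepresenter (B : LinearMap.BilinForm K V) (φ : Module.Dual K V) (e : ι → V)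
    (s : Finset ι) : V :=
  ∑ i ∈ s, (φ (e i) / B (e i) (e i)) • e i

lemma apply_fourierRepresenter_left {B : LinearMap.BilinForm K V} {e : ι → V} {s : Finset ι}
    (ortho : B.IsOrthoᵢ e) (self_ne_zero : ∀ i ∈ s, B (e i) (e i) ≠ 0) (φ : Module.Dual K V)
    {v : V} (hv : v ∈ Submodule.span K (e '' s)) :
    B (fourierRepresenter B φ e s) v = φ v := by
  refine LinearMap.eqOn_span (f := B (fourierRepresenter B φ e s)) ?_ hv
  rintro _ ⟨l, hl, rfl⟩
  rw [fourierRepresenter, map_sum, LinearMap.sum_apply, Finset.sum_eq_single_of_mem l hl]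
  · rw [map_smul, LinearMap.smul_apply, smul_eq_mul, div_mul_cancel₀ _ (self_ne_zero l hl)]
  · intro i _ hil
    rw [map_smul, LinearMap.smul_apply, ortho hil, smul_zero]

lemma rankOnePerturbation_sub_smul_eq_zero (B : LinearMap.BilinForm K V) (φ : Module.Dual K V)
    (m : K) {f k v : V} (hf : B f v = 0) (hk : B k v = φ v) (hm : 1 + m * φ k ≠ 0) :
    B (f - (m * φ f / (1 + m * φ k)) • k) v +
      m * φ (f - (m * φ f / (1 + m * φ k)) • k) * φ v = 0 := by
  simp only [map_sub, map_smul, LinearMap.sub_apply, LinearMap.smul_apply, smul_eq_mul, hf, hk]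
  field_simp
  ring

end BilinearForms

section Polynomials

lemma degree_sum_smul_of_monic {ι R : Type*} [Semiring R] {s : Finset ι} {c : ι → R}
    {q : ι → R[X]} {n : ℕ} (monic : ∀ i ∈ s, (q i).Monic)
    (natDegree_eq : ∀ i ∈ s, (q i).natDegree = n) (sum_ne_zero : ∑ i ∈ s, c i ≠ 0) :
    (∑ i ∈ s, c i • q i).degree = n := by
  refine degree_eq_of_le_of_coeff_ne_zero ?_ ?_
  · refine (degree_sum_le _ _).trans (Finset.sup_le fun i hi => (degree_smul_le _ _).trans ?_)
    exact degree_le_of_natDegree_le (natDegree_eq i hi).le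
  · have coeff_eq : ∀ i ∈ s, (c i • q i).coeff n = c i := fun i hi => by
      rw [coeff_smul, ← natDegree_eq i hi, (monic i hi).coeff_natDegree, smul_eq_mul, mul_one]
    rwa [finsetSum_coeff, Finset.sum_congr rfl coeff_eq]

lemma sum_neg_one_pow_mul_choose_mul_eval {R : Type*} [CommRing R] {q : R[X]} {n : ℕ}
    (hq : q.natDegree < n) (y : R) :
    ∑ l ∈ Finset.range (n + 1), (-1) ^ (n - l) * (n.choose l) * q.eval (y + l) = 0 := by
  simpa [fwdDiff_iter_eq_sum_shift] using congrFun (fwdDiff_iter_eq_zero_of_degree_lt hq) y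

/-- The linear functional `p ↦ p⁽ʲ⁾(x)`. -/
noncomputable def iterDerivAt {R : Type*} [CommSemiring R] (j : ℕ) (x : R) : Module.Dual R R[X] :=
  leval x ∘ₗ derivative ^ j

lemma iterDerivAt_apply {R : Type*} [CommSemiring R] (j : ℕ) (x : R) (p : R[X]) :
    iterDerivAt j x p = (derivative^[j] p).eval x := by
  simp [iterDerivAt, Module.End.pow_apply]

lemma integral_eval_mul_pos {a b : ℝ} (hab : a < b) {w : ℝ → ℝ} (w_pos : ∀ x ∈ Ioo a b, 0 < w x)
    {p : ℝ[X]} (p_ne_zero : p ≠ 0) (p_nonneg : ∀ x ∈ Ioo a b, 0 ≤ p.eval x)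
    (integrable : IntervalIntegrable (fun x => p.eval x * w x) volume a b) :
    0 < ∫ x in a..b, p.eval x * w x := by
  have nonneg : 0 ≤ᵐ[volume.restrict (Ioc a b)] fun x => p.eval x * w x := by
    rw [← Measure.restrict_congr_set Ioo_ae_eq_Ioc]
    filter_upwards [ae_restrict_mem measurableSet_Ioo] with x hx
    exact mul_nonneg (p_nonneg x hx) (w_pos x hx).le
  rw [← uIoc_of_le hab.le] at nonneg
  have nonroots_subset : Ioo a b \ p.roots.toFinset ⊆
      Function.support (fun x => p.eval x * w x) ∩ Ioc a b := by
    rintro x ⟨hx, not_root⟩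
    have eval_ne_zero : p.eval x ≠ 0 := by simpa [p_ne_zero] using not_root
    exact ⟨mul_ne_zero eval_ne_zero (w_pos x hx).ne', Ioo_subset_Ioc_self hx⟩
  refine (intervalIntegral.integral_pos_iff_support_of_nonneg_ae' nonneg integrable).2
    ⟨hab, lt_of_lt_of_le ?_ (measure_mono nonroots_subset)⟩
  rw [measure_sdiff_null (p.roots.toFinset.finite_toSet.measure_zero _)]
  simpa using hab

end Polynomials

section BetaIntegrals

lemma Gamma_add_natCast {s : ℝ} (hs : ∀ k : ℕ, s ≠ -k) (m : ℕ) :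
    Real.Gamma (s + m) = (ascPochhammer ℝ m).eval s * Real.Gamma s := by
  induction m with
  | zero => simp
  | succ m ih =>
    have : s + m ≠ 0 := fun h => hs m (eq_neg_of_add_eq_zero_left h)
    rw [Nat.cast_succ, ← add_assoc, Real.Gamma_add_one this, ih, ascPochhammer_succ_eval]
    ring

lemma integral_rpow_mul_sub_rpow {a b c : ℝ} (ha : 0 < a) (hb : 0 < b) (hc : 0 < c) :
    ∫ x in (0 : ℝ)..c, x ^ (a - 1) * (c - x) ^ (b - 1) =
      c ^ (a + b - 1) * ProbabilityTheory.beta a b := by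
  have ofReal_integrand : ∀ x ∈ uIcc 0 c, ((x ^ (a - 1) * (c - x) ^ (b - 1) : ℝ) : ℂ) =
      (x : ℂ) ^ ((a : ℂ) - 1) * ((c : ℂ) - x) ^ ((b : ℂ) - 1) := fun x hx => by
    rw [uIcc_of_le hc.le] at hx
    rw [Complex.ofReal_mul, Complex.ofReal_cpow hx.1, Complex.ofReal_cpow (sub_nonneg.2 hx.2)]
    push_cast
    rfl
  apply Complex.ofReal_injective
  rw [← intervalIntegral.integral_ofReal, intervalIntegral.integral_congr ofReal_integrand,
    Complex.betaIntegral_scaled _ _ hc,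
    Complex.betaIntegral_eq_Gamma_mul_div _ _ (by simpa) (by simpa), ProbabilityTheory.beta]
  push_cast [Complex.ofReal_cpow hc.le, ← Complex.Gamma_ofReal]
  rfl

lemma integral_one_sub_rpow_mul_one_add_rpow {a b : ℝ} (ha : -1 < a) (hb : -1 < b) :
    ∫ x in (-1 : ℝ)..1, (1 - x) ^ a * (1 + x) ^ b =
      2 ^ (a + b + 1) * ProbabilityTheory.beta (a + 1) (b + 1) := by
  calc ∫ x in (-1 : ℝ)..1, (1 - x) ^ a * (1 + x) ^ b
      = ∫ x in (-1 : ℝ)..1, (1 - x) ^ a * (2 - (1 - x)) ^ b := by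
        refine intervalIntegral.integral_congr fun x _ => ?_
        rw [show 2 - (1 - x) = 1 + x by ring]
    _ = ∫ x in (0 : ℝ)..2, x ^ a * (2 - x) ^ b := by
        rw [intervalIntegral.integral_comp_sub_left (fun x : ℝ => x ^ a * (2 - x) ^ b)]
        norm_num
    _ = 2 ^ (a + b + 1) * ProbabilityTheory.beta (a + 1) (b + 1) := by
        have beta_integral := integral_rpow_mul_sub_rpow (neg_lt_iff_pos_add.1 ha)
          (neg_lt_iff_pos_add.1 hb) two_pos
        rwa [add_sub_cancel_right, add_sub_cancel_right,
          show a + 1 + (b + 1) - 1 = a + b + 1 by ring] at beta_integral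

end BetaIntegrals

section JacobiWeight

/-- The Jacobi weight `(1 - x)^α (1 + x)^β`, meant for `x ∈ (-1, 1)`. -/
noncomputable def jacobiWeight (α β x : ℝ) : ℝ := (1 - x) ^ α * (1 + x) ^ β

lemma jacobiWeight_pos (α β : ℝ) {x : ℝ} (hx : x ∈ Ioo (-1) 1) : 0 < jacobiWeight α β x :=
  mul_pos (Real.rpow_pos_of_pos (by linarith [hx.2]) _)
    (Real.rpow_pos_of_pos (by linarith [hx.1]) _)

variable {α β : ℝ} (hα : -1 < α) (hβ : -1 < β)
include hα hβ

lemma intervalIntegrable_jacobiWeight :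
    IntervalIntegrable (jacobiWeight α β) volume (-1) 1 := by
  refine intervalIntegral.intervalIntegrable_of_integral_ne_zero ?_
  simp only [jacobiWeight]
  rw [integral_one_sub_rpow_mul_one_add_rpow hα hβ]
  have := ProbabilityTheory.beta_pos (neg_lt_iff_pos_add.1 hα) (neg_lt_iff_pos_add.1 hβ)
  positivity

lemma intervalIntegrable_eval_mul_jacobiWeight (p : ℝ[X]) :
    IntervalIntegrable (fun x => p.eval x * jacobiWeight α β x) volume (-1) 1 :=
  (intervalIntegrable_jacobiWeight hα hβ).continuousOn_mul p.continuous.continuousOn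

/-- The moment functional `p ↦ ∫ p(x) (1 - x)^α (1 + x)^β dx` of the Jacobi weight. -/
noncomputable def jacobiFunctional : Module.Dual ℝ ℝ[X] where
  toFun p := ∫ x in (-1 : ℝ)..1, p.eval x * jacobiWeight α β x
  map_add' p q := by
    simp only [eval_add, add_mul]
    exact intervalIntegral.integral_add (intervalIntegrable_eval_mul_jacobiWeight hα hβ p)
      (intervalIntegrable_eval_mul_jacobiWeight hα hβ q)
  map_smul' c p := by
    simp only [eval_smul, smul_eq_mul, mul_assoc, RingHom.id_apply]
    exact intervalIntegral.integral_const_mul _ _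

lemma jacobiFunctional_apply (p : ℝ[X]) :
    jacobiFunctional hα hβ p = ∫ x in (-1 : ℝ)..1, p.eval x * jacobiWeight α β x := rfl

lemma jacobiFunctional_sub_one_pow_mul_add_one_pow (k l : ℕ) :
    jacobiFunctional hα hβ ((X - 1) ^ k * (X + 1) ^ l) =
      (-1) ^ k * (2 ^ (α + k + (β + l) + 1) *
        ProbabilityTheory.beta (α + k + 1) (β + l + 1)) := by
  have hk : -1 < α + k := by linarith [k.cast_nonneg (α := ℝ)]
  have hl : -1 < β + l := by linarith [l.cast_nonneg (α := ℝ)]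
  rw [← integral_one_sub_rpow_mul_one_add_rpow hk hl, ← intervalIntegral.integral_const_mul]
  refine intervalIntegral.integral_congr_Ioo_of_le (by norm_num) fun x hx => ?_
  have one_sub_ne : 1 - x ≠ 0 := (sub_pos.2 hx.2).ne'
  have one_add_ne : 1 + x ≠ 0 := by linarith [hx.1]
  simp only [jacobiWeight, eval_mul, eval_pow, eval_sub, eval_add, eval_X, eval_one,
    Real.rpow_add_natCast one_sub_ne, Real.rpow_add_natCast one_add_ne]
  rw [← neg_sub 1 x, neg_pow, add_comm x 1]
  ring

/-- The inner product `∫ p(x) q(x) (1 - x)^α (1 + x)^β dx` on polynomials. -/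
noncomputable def jacobiForm : LinearMap.BilinForm ℝ ℝ[X] :=
  (LinearMap.mul ℝ ℝ[X]).compr₂ (jacobiFunctional hα hβ)

lemma jacobiForm_apply (p q : ℝ[X]) :
    jacobiForm hα hβ p q = jacobiFunctional hα hβ (p * q) := rfl

lemma jacobiForm_comm (p q : ℝ[X]) : jacobiForm hα hβ p q = jacobiForm hα hβ q p := by
  rw [jacobiForm_apply, mul_comm, jacobiForm_apply]

lemma jacobiForm_self_pos {p : ℝ[X]} (hp : p ≠ 0) : 0 < jacobiForm hα hβ p p :=
  integral_eval_mul_pos (by norm_num) (fun _ => jacobiWeight_pos α β) (mul_ne_zero hp hp)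
    (fun x _ => (mul_self_nonneg (p.eval x)).trans_eq eval_mul.symm)
    (intervalIntegrable_eval_mul_jacobiWeight hα hβ _)

lemma sobInner_eq (j : ℕ) (m : ℝ) (f g : ℝ[X]) :
    sobInner α β j m f g =
      jacobiForm hα hβ f g + m * iterDerivAt j 1 f * iterDerivAt j 1 g := by
  simp only [sobInner, jacobiForm_apply, jacobiFunctional_apply, jacobiWeight, iterDerivAt_apply,
    eval_mul, mul_assoc]

end JacobiWeight

section JacobiPolynomials

/-- The coefficient of `(X - 1)ⁿ⁻ˡ (X + 1)ˡ` in the Jacobi polynomial of degree `n`, for `l ≤ n`. -/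
noncomputable def jacobiCoeff (α β : ℝ) (n l : ℕ) : ℝ :=
  Real.Gamma (n + α + 1) * Real.Gamma (n + β + 1) / (2 ^ n * n.factorial) *
    (n.choose l / (Real.Gamma (α + (n - l : ℕ) + 1) * Real.Gamma (β + l + 1)))

lemma Gamma_add_natCast_add_one_pos {a : ℝ} (ha : -1 < a) (k : ℕ) : 0 < Real.Gamma (a + k + 1) :=
  Real.Gamma_pos_of_pos (by linarith [k.cast_nonneg (α := ℝ)])

lemma two_pow_mul_jacobiCoeff_add (α β : ℝ) (k l : ℕ) :
    2 ^ (k + l) * jacobiCoeff α β (k + l) l =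
      Real.Gamma ((k + l : ℕ) + α + 1) /
          (Real.Gamma (((k + l : ℕ) : ℝ) - k + 1) * Real.Gamma (α + k + 1)) *
        (Real.Gamma ((k + l : ℕ) + β + 1) /
          (Real.Gamma ((k : ℝ) + 1) * Real.Gamma (((k + l : ℕ) : ℝ) - k + β + 1))) := by
  have factorial_eq : ((k + l).factorial : ℝ) =
      (k + l).choose l * k.factorial * l.factorial := by
    exact_mod_cast (Nat.add_choose_mul_factorial_mul_factorial k l).symm
  have sub_eq : ((k + l : ℕ) : ℝ) - k = l := by rw [Nat.cast_add, add_sub_cancel_left]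
  have choose_ne_zero : ((k + l).choose l : ℝ) ≠ 0 :=
    Nat.cast_ne_zero.2 (Nat.choose_pos (Nat.le_add_left l k)).ne'
  rw [jacobiCoeff, factorial_eq, sub_eq, Nat.add_sub_cancel, Real.Gamma_nat_eq_factorial,
    Real.Gamma_nat_eq_factorial, add_comm (l : ℝ) β]
  field_simp

lemma jacobiP_eq_sum (α β : ℝ) (n : ℕ) :
    jacobiP α β n =
      ∑ l ∈ Finset.range (n + 1), jacobiCoeff α β n l • ((X - 1) ^ (n - l) * (X + 1) ^ l) := by
  rw [jacobiP, ← Finset.sum_flip]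
  refine Finset.sum_congr rfl fun l hl => ?_
  obtain ⟨k, rfl⟩ := Nat.exists_eq_add_of_le' (Finset.mem_range_succ_iff.1 hl)
  rw [Nat.add_sub_cancel, Nat.add_sub_cancel_left, ← two_pow_mul_jacobiCoeff_add, smul_eq_C_mul]
  have two_mul_half : (C 2 * C 2⁻¹ : ℝ[X]) = 1 := by rw [← C_mul]; norm_num
  calc C (2 ^ (k + l) * jacobiCoeff α β (k + l) l) * (C 2⁻¹ * (X - 1)) ^ k *
        (C 2⁻¹ * (X + 1)) ^ l
      = (C 2 * C 2⁻¹) ^ (k + l) *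
          (C (jacobiCoeff α β (k + l) l) * ((X - 1) ^ k * (X + 1) ^ l)) := by
        simp only [C_mul, C_pow, mul_pow]
        ring
    _ = C (jacobiCoeff α β (k + l) l) * ((X - 1) ^ k * (X + 1) ^ l) := by
        rw [two_mul_half, one_pow, one_mul]

variable {α β : ℝ} (hα : -1 < α) (hβ : -1 < β)
include hα hβ

lemma jacobiCoeff_pos {n l : ℕ} (hl : l ≤ n) : 0 < jacobiCoeff α β n l := by
  have := Gamma_add_natCast_add_one_pos hα n
  have := Gamma_add_natCast_add_one_pos hβ n
  have := Gamma_add_natCast_add_one_pos hα (n - l)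
  have := Gamma_add_natCast_add_one_pos hβ l
  have := Nat.choose_pos hl
  rw [jacobiCoeff, add_comm (n : ℝ) α, add_comm (n : ℝ) β]
  positivity

lemma degree_jacobiP (n : ℕ) : (jacobiP α β n).degree = n := by
  have monic_sub : (X - 1 : ℝ[X]).Monic := monic_X_sub_C 1
  have monic_add : (X + 1 : ℝ[X]).Monic := monic_X_add_C 1
  have natDegree_sub : (X - 1 : ℝ[X]).natDegree = 1 := natDegree_X_sub_C 1
  have natDegree_add : (X + 1 : ℝ[X]).natDegree = 1 := natDegree_X_add_C 1
  rw [jacobiP_eq_sum]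
  refine degree_sum_smul_of_monic (fun l _ => (monic_sub.pow _).mul (monic_add.pow _))
    (fun l hl => ?_) ?_
  · rw [(monic_sub.pow _).natDegree_mul (monic_add.pow _), monic_sub.natDegree_pow,
      monic_add.natDegree_pow, natDegree_sub, natDegree_add, mul_one, mul_one,
      Nat.sub_add_cancel (Finset.mem_range_succ_iff.1 hl)]
  · exact (Finset.sum_pos (fun l hl => jacobiCoeff_pos hα hβ (Finset.mem_range_succ_iff.1 hl))
      Finset.nonempty_range_add_one).ne'

lemma span_jacobiP_image_Iio (n : ℕ) :
    Submodule.span ℝ (jacobiP α β '' Iio n) = degreeLT ℝ n :=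
  let S : Polynomial.Sequence ℝ := ⟨jacobiP α β, degree_jacobiP hα hβ⟩
  S.span_degreeLT fun i _ => (leadingCoeff_ne_zero.2 (S.ne_zero i)).isUnit

-- The Gamma factors of `jacobiCoeff` cancel those of the moments, except for the quotient
-- `Γ(β + 1 + l + m) / Γ(β + 1 + l)`, a polynomial of degree `m` in `l`; the sum over `l` is the
-- `n`-th finite difference of that polynomial.
lemma jacobiFunctional_jacobiP_mul_add_one_pow {m n : ℕ} (hmn : m < n) :
    jacobiFunctional hα hβ (jacobiP α β n * (X + 1) ^ m) = 0 := by
  set A : ℝ := Real.Gamma (n + α + 1) * Real.Gamma (n + β + 1) / (2 ^ n * n.factorial) *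
    (2 ^ (α + β + n + m + 1) / Real.Gamma (α + β + n + m + 2)) with hA
  have summand_eq : ∀ l ∈ Finset.range (n + 1), jacobiFunctional hα hβ
      (jacobiCoeff α β n l • ((X - 1) ^ (n - l) * (X + 1) ^ l) * (X + 1) ^ m) =
      A * ((-1) ^ (n - l) * n.choose l * (ascPochhammer ℝ m).eval (β + 1 + l)) := by
    intro l hl
    obtain ⟨k, rfl⟩ := Nat.exists_eq_add_of_le' (Finset.mem_range_succ_iff.1 hl)
    have Gamma_α_ne_zero := (Gamma_add_natCast_add_one_pos hα k).ne'
    have Gamma_β_ne_zero := (Gamma_add_natCast_add_one_pos hβ l).ne'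
    have Gamma_shift : Real.Gamma (β + (l + m : ℕ) + 1) =
        (ascPochhammer ℝ m).eval (β + 1 + l) * Real.Gamma (β + l + 1) := by
      rw [add_right_comm β 1, ← Gamma_add_natCast fun i => by
        linarith [l.cast_nonneg (α := ℝ), i.cast_nonneg (α := ℝ)]]
      push_cast
      ring_nf
    rw [smul_mul_assoc, mul_assoc, ← pow_add, map_smul,
      jacobiFunctional_sub_one_pow_mul_add_one_pow, smul_eq_mul, jacobiCoeff, hA,
      ProbabilityTheory.beta, Gamma_shift, Nat.add_sub_cancel,
      show α + k + 1 + (β + (l + m : ℕ) + 1) = α + β + (k + l : ℕ) + m + 2 by push_cast; ring,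
      show α + k + (β + (l + m : ℕ)) + 1 = α + β + (k + l : ℕ) + m + 1 by push_cast; ring]
    field_simp
  rw [jacobiP_eq_sum, Finset.sum_mul, map_sum, Finset.sum_congr rfl summand_eq, ← Finset.mul_sum,
    sum_neg_one_pow_mul_choose_mul_eval (by rwa [ascPochhammer_natDegree]), mul_zero]

lemma jacobiForm_jacobiP_eq_zero_of_degree_lt {n : ℕ} {p : ℝ[X]} (hp : p.degree < n) :
    jacobiForm hα hβ (jacobiP α β n) p = 0 := by
  rw [← sum_taylor_eq p (-1), Polynomial.sum_def, map_sum]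
  refine Finset.sum_eq_zero fun i hi => ?_
  have hin : i < n := by
    have := le_degree_of_mem_supp i hi
    rw [degree_taylor] at this
    exact_mod_cast this.trans_lt hp
  rw [← smul_eq_C_mul, map_smul, jacobiForm_apply, C_neg, C_1, sub_neg_eq_add,
    jacobiFunctional_jacobiP_mul_add_one_pow hα hβ hin, smul_zero]

lemma isOrthoᵢ_jacobiP : (jacobiForm hα hβ).IsOrthoᵢ (jacobiP α β) := by
  intro i l hil
  change jacobiForm hα hβ (jacobiP α β i) (jacobiP α β l) = 0
  rcases hil.lt_or_gt with h | h
  · rw [jacobiForm_comm]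
    exact jacobiForm_jacobiP_eq_zero_of_degree_lt hα hβ (by simpa [degree_jacobiP hα hβ] using h)
  · exact jacobiForm_jacobiP_eq_zero_of_degree_lt hα hβ (by simpa [degree_jacobiP hα hβ] using h)

lemma jacobiNormSq_eq_jacobiForm (n : ℕ) :
    jacobiNormSq α β n = jacobiForm hα hβ (jacobiP α β n) (jacobiP α β n) := by
  simp only [jacobiNormSq, jacobiForm_apply, jacobiFunctional_apply, jacobiWeight, eval_mul, sq,
    mul_assoc]

lemma jacobiNormSq_pos (n : ℕ) : 0 < jacobiNormSq α β n := by
  rw [jacobiNormSq_eq_jacobiForm hα hβ]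
  refine jacobiForm_self_pos hα hβ (degree_ne_bot.1 ?_)
  simp [degree_jacobiP hα hβ]

end JacobiPolynomials

section Kernels

lemma iterDerivAt_kernKPoly (α β : ℝ) (j n : ℕ) :
    iterDerivAt j 1 (kernKPoly α β j n) = kernK α β j j n 1 1 := by
  simp only [kernKPoly, kernK, ← smul_eq_C_mul, map_sum, map_smul, iterDerivAt_apply, smul_eq_mul,
    div_mul_eq_mul_div]

variable {α β : ℝ} (hα : -1 < α) (hβ : -1 < β)
include hα hβ

lemma kernK_self_nonneg (j n : ℕ) (x : ℝ) : 0 ≤ kernK α β j j n x x :=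
  Finset.sum_nonneg fun i _ => div_nonneg (mul_self_nonneg _) (jacobiNormSq_pos hα hβ i).le

lemma kernKPoly_eq_fourierRepresenter (j n : ℕ) :
    kernKPoly α β j n = fourierRepresenter (jacobiForm hα hβ) (iterDerivAt j 1) (jacobiP α β)
      (Finset.range (n + 1)) := by
  simp only [kernKPoly, fourierRepresenter, smul_eq_C_mul, iterDerivAt_apply,
    jacobiNormSq_eq_jacobiForm hα hβ]

lemma jacobiForm_kernKPoly (j : ℕ) {n : ℕ} {p : ℝ[X]} (hp : p.degree ≤ n) :
    jacobiForm hα hβ (kernKPoly α β j n) p = iterDerivAt j 1 p := by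
  rw [kernKPoly_eq_fourierRepresenter hα hβ]
  refine apply_fourierRepresenter_left (isOrthoᵢ_jacobiP hα hβ) (fun i _ => ?_) _ ?_
  · rw [← jacobiNormSq_eq_jacobiForm]
    exact (jacobiNormSq_pos hα hβ i).ne'
  · rw [Finset.coe_range, span_jacobiP_image_Iio hα hβ, mem_degreeLT]
    exact hp.trans_lt (by exact_mod_cast n.lt_succ_self)

end Kernels

theorem sobQ_orthogonal_general {α β : ℝ} (hα : -1 < α) (hβ : -1 < β) (j : ℕ) (Ms : ℕ → ℝ) {n : ℕ}
    (hn : 1 ≤ n) (hM : 1 + Ms n * kernK α β j j (n - 1) 1 1 ≠ 0) {p : ℝ[X]}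
    (hp : p.degree ≤ (n - 1 : ℕ)) :
    sobInner α β j (Ms n) (sobQ α β j Ms n) p = 0 := by
  have degree_lt : p.degree < n := hp.trans_lt (by exact_mod_cast Nat.sub_one_lt_of_lt hn)
  rw [← iterDerivAt_kernKPoly] at hM
  rw [sobInner_eq hα hβ, sobQ, ← iterDerivAt_kernKPoly, ← iterDerivAt_apply, ← smul_eq_C_mul]
  exact rankOnePerturbation_sub_smul_eq_zero _ _ _
    (jacobiForm_jacobiP_eq_zero_of_degree_lt hα hβ degree_lt) (jacobiForm_kernKPoly hα hβ j hp) hM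

/-- `Q_n` is orthogonal to every polynomial of degree ≤ n−1 with respect to
the varying Sobolev inner product. -/
theorem sobQ_orthogonal (α β : ℝ) (hα : -1 < α) (hβ : -1 < β) (j : ℕ) (Ms : ℕ → ℝ)
    (hMs : ∀ n, 0 ≤ Ms n) (n : ℕ) (hn : 1 ≤ n) (p : Polynomial ℝ)
    (hp : p.degree ≤ (n - 1 : ℕ)) :
    sobInner α β j (Ms n) (sobQ α β j Ms n) p = 0 := by
  have hK := kernK_self_nonneg hα hβ j (n - 1) 1
  exact sobQ_orthogonal_general hα hβ j Ms hn (by have := hMs n; positivity) hp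
end

section
/- Fix real α, β > −1, j ∈ ℕ, γ ∈ ℝ, M > 0, and a sequence M_n ≥ 0 with lim_{n→∞} M_n n^γ = M. If γ = 2(α+2j+1), then for every fixed k ∈ ℕ, lim_{n→∞} Q_n^{(k)}(1)/(P_n^{(α,β)})^{(k)}(1) = θ_{α,β,j,k}, where θ_{α,β,j,k} = [M(k−j) + Γ²(α+j+1)·2^{α+β+2j+1}·(α+2j+1)·(α+j+k+1)] / [(α+j+k+1)·(M + Γ²(α+j+1)·2^{α+β+2j+1}·(α+2j+1))]. -/
open Polynomial Filter

/-!
Evaluating at `1`, `Q_n^{(k)}(1) / P_n^{(k)}(1)` equals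
`1 - M_n P_n^{(j)}(1) K_{n-1}^{(j,k)}(1,1) / (P_n^{(k)}(1) (1 + M_n K_{n-1}^{(j,j)}(1,1)))`,
so only asymptotics at `1` matter. By the Chu–Vandermonde identity
`P_n^{(k)}(1) = k! / 2 ^ k * (n+α choose n-k) * (n+α+β+k choose k)`, which grows like `n^{α+2k}`.
For the norm, integrate term by term against the Beta density: the moments of `P_n` are alternating
binomial sums of polynomials, i.e. iterated finite differences, which kill all degrees below `n`,
and one finds `‖P_n‖² ∼ 2^{α+β} / n`. Summing the terms, `K_{n-1}^{(j,k)}(1,1)` grows like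
`n^{2(α+j+k+1)}`. Hence `K_{n-1}^{(j,j)}(1,1)` and
`P_n^{(j)}(1) K_{n-1}^{(j,k)}(1,1) / P_n^{(k)}(1)` both have the critical order `n^{2(α+2j+1)}`,
which `M_n` balances exactly.
-/

namespace JacobiSobolev

open Asymptotics Finset Topology

section Gamma

lemma prod_range_add_natCast {R : Type*} [CommSemiring R] (x : R) (m : ℕ) :
    ∏ i ∈ range m, (x + i) = (ascPochhammer R m).eval x := by
  induction m with
  | zero => simp
  | succ m ih => rw [prod_range_succ, ih, ascPochhammer_succ_eval]

lemma gamma_add_natCast {x : ℝ} (hx : Real.Gamma x ≠ 0) (m : ℕ) :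
    Real.Gamma (x + m) = (ascPochhammer ℝ m).eval x * Real.Gamma x := by
  induction m with
  | zero => simp
  | succ m ih =>
    have hxm : x + m ≠ 0 := fun h => hx (by
      rw [eq_neg_of_add_eq_zero_left h, Real.Gamma_neg_nat_eq_zero])
    rw [Nat.cast_succ, ← add_assoc, Real.Gamma_add_one hxm, ih, ascPochhammer_succ_eval]
    ring

lemma choose_eq_gamma_div {x : ℝ} {m : ℕ} (hx : Real.Gamma (x - m + 1) ≠ 0) :
    Ring.choose x m = Real.Gamma (x + 1) / (m.factorial * Real.Gamma (x - m + 1)) := by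
  have hasc : (ascPochhammer ℝ m).eval (x - m + 1) = m.factorial * Ring.choose x m := by
    rw [← ascPochhammer_smeval_eq_eval, ← descPochhammer_smeval_eq_ascPochhammer,
      Ring.descPochhammer_eq_factorial_smul_choose, nsmul_eq_mul]
  rw [show x + 1 = x - m + 1 + m by ring, gamma_add_natCast hx, hasc]
  field_simp

/-- For `Γ(s) ≠ 0` this is Euler's limit formula; at the poles of `Γ` it is the asymptotics of the
falling factorial. -/
lemma isEquivalent_gamma_natCast_add_add_one (s : ℝ) :
    (fun n : ℕ => Real.Gamma (n + s + 1)) ~[atTop] fun n : ℕ => (n : ℝ) ^ s * n.factorial := by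
  by_cases hs : Real.Gamma s = 0
  · obtain ⟨m, rfl⟩ := (Real.Gamma_eq_zero_iff s).1 hs
    have h := (isEquivalent_descFactorial m).inv.mul
      (IsEquivalent.refl (u := fun n : ℕ => (n.factorial : ℝ)))
    refine (h.congr_left ?_).congr_right ?_
    · filter_upwards [eventually_ge_atTop m] with n hn
      rw [← sub_eq_add_neg, ← Nat.cast_sub hn, Real.Gamma_nat_eq_factorial]
      simp only [Pi.mul_apply, Pi.inv_apply]
      rw [← Nat.factorial_mul_descFactorial hn]
      have : (n.descFactorial m : ℝ) ≠ 0 := by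
        exact_mod_cast (Nat.descFactorial_pos.2 hn).ne'
      push_cast
      field_simp
    · filter_upwards with n
      simp [Real.rpow_neg]
  · refine isEquivalent_of_tendsto_one ?_
    have h := ((Real.GammaSeq_tendsto_Gamma s).inv₀ hs).const_mul (Real.Gamma s)
    rw [mul_inv_cancel₀ hs] at h
    refine h.congr fun n => ?_
    have hΓ := gamma_add_natCast hs (n + 1)
    rw [show s + ((n + 1 : ℕ) : ℝ) = n + s + 1 by push_cast; ring] at hΓ
    rw [Real.GammaSeq, prod_range_add_natCast, inv_div, Pi.div_apply, hΓ]
    ring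

lemma isEquivalent_choose_natCast_add (a : ℝ) (k : ℕ) :
    (fun n : ℕ => Ring.choose (n + a) k) ~[atTop] fun n : ℕ => (n : ℝ) ^ k / k.factorial := by
  have h := ((isEquivalent_gamma_natCast_add_add_one a).div
    (isEquivalent_gamma_natCast_add_add_one (a - k))).div
    (IsEquivalent.refl (u := fun _ : ℕ => (k.factorial : ℝ)))
  refine (h.congr_left ?_).congr_right ?_
  · filter_upwards [tendsto_natCast_atTop_atTop.eventually_gt_atTop (k - a)] with n hn
    have hΓ : Real.Gamma (n + a - k + 1) ≠ 0 := (Real.Gamma_pos_of_pos (by linarith)).ne'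
    simp only [Pi.div_apply]
    rw [choose_eq_gamma_div hΓ, ← add_sub_assoc, div_div, mul_comm]
  · filter_upwards [eventually_gt_atTop 0] with n hn
    have hn : (0 : ℝ) < n := by exact_mod_cast hn
    simp only [Pi.div_apply]
    rw [mul_div_mul_right _ _ (by positivity), ← Real.rpow_sub hn, sub_sub_cancel,
      Real.rpow_natCast]

lemma isEquivalent_choose_natCast_add_sub {a : ℝ} {k : ℕ} (ha : Real.Gamma (a + k + 1) ≠ 0) :
    (fun n : ℕ => Ring.choose (n + a) (n - k)) ~[atTop]
      fun n : ℕ => (n : ℝ) ^ (a + k) / Real.Gamma (a + k + 1) := by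
  have h := ((isEquivalent_gamma_natCast_add_add_one a).div
    (isEquivalent_gamma_natCast_add_add_one (-k))).div
    (IsEquivalent.refl (u := fun _ : ℕ => Real.Gamma (a + k + 1)))
  refine (h.congr_left ?_).congr_right ?_
  · filter_upwards [eventually_ge_atTop k] with n hn
    have harg : (n : ℝ) + a - (n - k : ℕ) + 1 = a + k + 1 := by rw [Nat.cast_sub hn]; ring
    simp only [Pi.div_apply]
    rw [choose_eq_gamma_div (by rwa [harg]), harg, ← sub_eq_add_neg (n : ℝ), ← Nat.cast_sub hn,
      Real.Gamma_nat_eq_factorial, div_div]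
  · filter_upwards [eventually_gt_atTop 0] with n hn
    have hn : (0 : ℝ) < n := by exact_mod_cast hn
    simp only [Pi.div_apply]
    rw [mul_div_mul_right _ _ (by positivity), ← Real.rpow_sub hn, sub_neg_eq_add]

end Gamma

section Sums

lemma isEquivalent_sum_range {a b : ℕ → ℝ} (h : a ~[atTop] b) (hb : ∀ n, 0 ≤ b n)
    (hsum : Tendsto (fun n => ∑ i ∈ range n, b i) atTop atTop) :
    (fun n => ∑ i ∈ range n, a i) ~[atTop] fun n => ∑ i ∈ range n, b i := by
  refine (h.isLittleO.sum_range hb hsum).congr_left fun n => ?_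
  simp

lemma isEquivalent_rpow_add_one_sub_rpow {p : ℝ} (hp : p ≠ 0) :
    (fun n : ℕ => ((n + 1 : ℕ) : ℝ) ^ p - (n : ℝ) ^ p) ~[atTop]
      fun n : ℕ => p * (n : ℝ) ^ (p - 1) := by
  have hderiv : HasDerivAt (fun x : ℝ => x ^ p) p 1 := by
    simpa using Real.hasDerivAt_rpow_const (x := 1) (p := p) (Or.inl one_ne_zero)
  have hinv : Tendsto (fun n : ℕ => (n : ℝ)⁻¹) atTop (𝓝[>] 0) :=
    tendsto_inv_atTop_nhdsGT_zero.comp tendsto_natCast_atTop_atTop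
  have hslope := (isEquivalent_const_iff_tendsto hp).2
    (hderiv.tendsto_slope_zero_right.comp hinv)
  have h := hslope.mul (IsEquivalent.refl (u := fun n : ℕ => (n : ℝ) ^ (p - 1)))
  refine h.congr_left ?_
  filter_upwards [eventually_gt_atTop 0] with n hn
  have hn : (0 : ℝ) < n := by exact_mod_cast hn
  simp only [Pi.mul_apply, Function.comp_apply, inv_inv, smul_eq_mul, Real.one_rpow]
  rw [show 1 + (n : ℝ)⁻¹ = ((n + 1 : ℕ) : ℝ) / n by push_cast; field_simp,
    Real.div_rpow (by positivity) hn.le, Real.rpow_sub_one hn.ne']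
  field_simp

lemma isEquivalent_sum_range_of_isEquivalent_rpow {a : ℕ → ℝ} {c p : ℝ} (hc : c ≠ 0) (hp : 0 < p)
    (h : a ~[atTop] fun n : ℕ => c * (n : ℝ) ^ (p - 1)) :
    (fun n : ℕ => ∑ i ∈ range n, a i) ~[atTop] fun n : ℕ => c / p * (n : ℝ) ^ p := by
  let b : ℕ → ℝ := fun n => ((n + 1 : ℕ) : ℝ) ^ p - (n : ℝ) ^ p
  have hb_sum (n : ℕ) : ∑ i ∈ range n, b i = (n : ℝ) ^ p := by
    rw [sum_range_sub (fun i : ℕ => (i : ℝ) ^ p), Nat.cast_zero, Real.zero_rpow hp.ne', sub_zero]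
  have hb_nonneg (n : ℕ) : 0 ≤ b n :=
    sub_nonneg.2 (Real.rpow_le_rpow n.cast_nonneg (by simp) hp.le)
  have hab : (fun n => p / c * a n) ~[atTop] b := by
    refine (((IsEquivalent.refl (u := fun _ : ℕ => p / c)).mul h).congr_right ?_).trans
      (isEquivalent_rpow_add_one_sub_rpow hp.ne').symm
    filter_upwards with n
    simp only [Pi.mul_apply]
    field_simp
  have hb_tendsto : Tendsto (fun n => ∑ i ∈ range n, b i) atTop atTop := by
    simp only [hb_sum]
    exact (tendsto_rpow_atTop hp).comp tendsto_natCast_atTop_atTop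
  have hsum := isEquivalent_sum_range hab hb_nonneg hb_tendsto
  simp only [← mul_sum, hb_sum] at hsum
  refine ((IsEquivalent.refl (u := fun _ : ℕ => c / p)).mul hsum).congr_left ?_
  filter_upwards with n
  simp only [Pi.mul_apply]
  field_simp

end Sums

section ValuesAtOne

/-- The coefficient of `((x - 1) / 2) ^ s * ((x + 1) / 2) ^ (n - s)` in the definition of
`P_n^{(α,β)}`. -/
noncomputable def jacobiCoeff (α β : ℝ) (n s : ℕ) : ℝ :=
  Real.Gamma (n + α + 1) / (Real.Gamma ((n : ℝ) - s + 1) * Real.Gamma (α + s + 1)) *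
    (Real.Gamma (n + β + 1) / (Real.Gamma ((s : ℝ) + 1) * Real.Gamma ((n : ℝ) - s + β + 1)))

/-- The Jacobi polynomial `P_n^{(α,β)}` as a polynomial in `(x - 1) / 2`. -/
noncomputable def shiftedJacobiP (α β : ℝ) (n : ℕ) : ℝ[X] :=
  (jacobiP α β n).comp (C 2 * X + C 1)

variable {α β : ℝ} {n : ℕ}

lemma jacobiCoeff_eq_choose_mul_choose (hα : -1 < α) (hβ : -1 < β) {s : ℕ} (hs : s ≤ n) :
    jacobiCoeff α β n s = Ring.choose (n + α) (n - s) * Ring.choose (n + β) s := by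
  rw [choose_eq_gamma_div, choose_eq_gamma_div, Nat.cast_sub hs, jacobiCoeff,
    Real.Gamma_nat_eq_factorial, ← Nat.cast_sub hs, Real.Gamma_nat_eq_factorial, Nat.cast_sub hs,
    show (n : ℝ) + α - (n - s) = α + s by ring, add_sub_right_comm]
  · refine (Real.Gamma_pos_of_pos ?_).ne'
    linarith [Nat.cast_le (α := ℝ).2 hs]
  · refine (Real.Gamma_pos_of_pos ?_).ne'
    rw [Nat.cast_sub hs]
    linarith [s.cast_nonneg (α := ℝ)]

variable (α β n) in
lemma shiftedJacobiP_eq_sum :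
    shiftedJacobiP α β n =
      ∑ s ∈ range (n + 1), C (jacobiCoeff α β n s) * (X ^ s * (X + 1) ^ (n - s)) := by
  have hX : C (2⁻¹ : ℝ) * (C 2 * X) = X := by rw [← mul_assoc, ← C_mul]; norm_num
  have hone : C (2⁻¹ : ℝ) * (1 + 1) = 1 := by rw [← C_1, ← C_add, ← C_mul]; norm_num
  rw [shiftedJacobiP, jacobiP, Polynomial.sum_comp]
  refine sum_congr rfl fun s _ => ?_
  change (C (jacobiCoeff α β n s) * _ * _).comp _ = _
  simp only [mul_comp, pow_comp, sub_comp, add_comp, C_comp, X_comp, one_comp, C_1,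
    add_sub_cancel_right, add_assoc, mul_add _ (C (2 : ℝ) * X), hX, hone, mul_assoc]

variable (α β n) in
lemma eval_shiftedJacobiP (x : ℝ) :
    (shiftedJacobiP α β n).eval x = (jacobiP α β n).eval (2 * x + 1) := by
  simp [shiftedJacobiP]

variable (α β n) in
lemma natDegree_shiftedJacobiP_le : (shiftedJacobiP α β n).natDegree ≤ n := by
  rw [shiftedJacobiP_eq_sum]
  refine natDegree_sum_le_of_forall_le _ _ fun s hs => ?_
  refine (natDegree_C_mul_le _ _).trans (natDegree_mul_le.trans ?_)
  have hpow : ((X + 1 : ℝ[X]) ^ (n - s)).natDegree ≤ (n - s) * 1 :=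
    natDegree_pow_le_of_le _ (natDegree_X_add_C (1 : ℝ)).le
  have hs := mem_range.1 hs
  rw [natDegree_X_pow]
  lia

variable (α β n) in
lemma coeff_shiftedJacobiP_eq_sum {k : ℕ} (hk : k ≤ n) :
    (shiftedJacobiP α β n).coeff k =
      ∑ s ∈ range (k + 1), jacobiCoeff α β n s * ((n - s).choose (k - s) : ℝ) := by
  have hsub : range (k + 1) ⊆ range (n + 1) := range_subset_range.2 (by lia)
  rw [shiftedJacobiP_eq_sum, finsetSum_coeff, ← sum_subset hsub]
  · refine sum_congr rfl fun s hs => ?_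
    rw [coeff_C_mul, coeff_X_pow_mul', if_pos (mem_range_succ_iff.1 hs), coeff_X_add_one_pow]
  · intro s _ hs
    rw [coeff_C_mul, coeff_X_pow_mul', if_neg (mt mem_range_succ_iff.2 hs), mul_zero]

lemma coeff_shiftedJacobiP (hα : -1 < α) (hβ : -1 < β) {k : ℕ} (hk : k ≤ n) :
    (shiftedJacobiP α β n).coeff k =
      Ring.choose (n + α) (n - k) * Ring.choose (n + α + β + k) k := by
  rw [coeff_shiftedJacobiP_eq_sum α β n hk,
    show (n : ℝ) + α + β + k = n + β + (α + k) by ring, Ring.add_choose_eq k (Commute.all _ _),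
    Nat.sum_antidiagonal_eq_sum_range_succ
      (fun i l => Ring.choose ((n : ℝ) + β) i * Ring.choose (α + k) l), mul_sum]
  refine sum_congr rfl fun s hs => ?_
  have hs := mem_range_succ_iff.1 hs
  have h := Ring.choose_smul_choose ((n : ℝ) + α) (Nat.sub_le_sub_left hs n)
  rw [show n - s - (n - k) = k - s by lia, Nat.cast_sub hk,
    show (n : ℝ) + α - (n - k) = α + k by ring, nsmul_eq_mul,
    ← Nat.choose_symm (Nat.sub_le_sub_left hs n), show n - s - (n - k) = k - s by lia] at h
  rw [jacobiCoeff_eq_choose_mul_choose hα hβ (hs.trans hk)]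
  linear_combination Ring.choose ((n : ℝ) + β) s * h

lemma factorial_mul_coeff_comp_C_mul_X_add_C {R : Type*} [CommSemiring R] (f : R[X]) (a r : R)
    (k : ℕ) :
    k.factorial * (f.comp (C a * X + C r)).coeff k = (derivative^[k] f).eval r * a ^ k := by
  have hcomp : f.comp (C a * X + C r) = (taylor r f).comp (C a * X) := by
    rw [taylor_apply, comp_assoc]
    simp
  rw [hcomp, comp_C_mul_X_coeff, taylor_coeff, ← factorial_smul_hasseDeriv]
  simp [mul_assoc]

lemma iterate_derivative_jacobiP_eval_one (hα : -1 < α) (hβ : -1 < β) {k : ℕ} (hk : k ≤ n) :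
    (derivative^[k] (jacobiP α β n)).eval 1 =
      k.factorial / 2 ^ k * (Ring.choose (n + α) (n - k) * Ring.choose (n + α + β + k) k) := by
  have h := factorial_mul_coeff_comp_C_mul_X_add_C (jacobiP α β n) 2 1 k
  rw [← shiftedJacobiP, coeff_shiftedJacobiP hα hβ hk] at h
  field_simp
  linarith

/-- The constant `c` in `(P_n^{(α,β)})^{(k)}(1) ∼ c n^{α+2k}`; it does not depend on `β`. -/
noncomputable def derivOneConst (α : ℝ) (k : ℕ) : ℝ :=
  1 / (2 ^ k * Real.Gamma (α + k + 1))

lemma derivOneConst_pos (hα : -1 < α) (k : ℕ) : 0 < derivOneConst α k := by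
  have := Real.Gamma_pos_of_pos (show 0 < α + k + 1 by linarith [k.cast_nonneg (α := ℝ)])
  rw [derivOneConst]
  positivity

lemma isEquivalent_iterate_derivative_jacobiP_eval_one (hα : -1 < α) (hβ : -1 < β) (k : ℕ) :
    (fun n => (derivative^[k] (jacobiP α β n)).eval 1) ~[atTop]
      fun n : ℕ => derivOneConst α k * (n : ℝ) ^ (α + 2 * k) := by
  have hΓ : Real.Gamma (α + k + 1) ≠ 0 :=
    (Real.Gamma_pos_of_pos (by linarith [k.cast_nonneg (α := ℝ)])).ne'
  have h := (IsEquivalent.refl (u := fun _ : ℕ => (k.factorial / 2 ^ k : ℝ))).mul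
    ((isEquivalent_choose_natCast_add_sub hΓ).mul
      (isEquivalent_choose_natCast_add (α + β + k) k))
  refine (h.congr_left ?_).congr_right ?_
  · filter_upwards [eventually_ge_atTop k] with n hn
    rw [iterate_derivative_jacobiP_eval_one hα hβ hn]
    simp only [Pi.mul_apply, add_assoc]
  · filter_upwards [eventually_gt_atTop 0] with n hn
    have hn : (0 : ℝ) < n := by exact_mod_cast hn
    simp only [Pi.mul_apply]
    have hpow : (n : ℝ) ^ (α + 2 * k) = n ^ (α + k) * n ^ k := by
      rw [← Real.rpow_add_natCast hn.ne']
      ring_nf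
    rw [hpow, derivOneConst]
    field_simp

lemma eventually_iterate_derivative_jacobiP_eval_one_ne_zero (hα : -1 < α) (hβ : -1 < β) (k : ℕ) :
    ∀ᶠ n in atTop, (derivative^[k] (jacobiP α β n)).eval 1 ≠ 0 := by
  have h := (isEquivalent_iterate_derivative_jacobiP_eval_one hα hβ k).isBigO_symm.eq_zero_imp
  filter_upwards [h, eventually_gt_atTop 0] with n himp hn
  have hn : (0 : ℝ) < n := by exact_mod_cast hn
  exact mt himp (mul_pos (derivOneConst_pos hα k) (Real.rpow_pos_of_pos hn _)).ne'

end ValuesAtOne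

section Beta

lemma ofReal_rpow_mul_one_sub_rpow {u : ℝ} (hu : u ∈ Set.Icc (0 : ℝ) 1) (a b : ℝ) :
    ((u ^ a * (1 - u) ^ b : ℝ) : ℂ) =
      (u : ℂ) ^ (((a + 1 : ℝ) : ℂ) - 1) * (1 - (u : ℂ)) ^ (((b + 1 : ℝ) : ℂ) - 1) := by
  rw [Complex.ofReal_mul, Complex.ofReal_cpow hu.1, Complex.ofReal_cpow (sub_nonneg.2 hu.2)]
  push_cast
  simp

variable {a b : ℝ}

lemma intervalIntegrable_rpow_mul_one_sub_rpow (ha : -1 < a) (hb : -1 < b) :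
    IntervalIntegrable (fun u : ℝ => u ^ a * (1 - u) ^ b) MeasureTheory.volume 0 1 := by
  have h := Complex.betaIntegral_convergent (u := ((a + 1 : ℝ) : ℂ)) (v := ((b + 1 : ℝ) : ℂ))
    (by rw [Complex.ofReal_re]; linarith) (by rw [Complex.ofReal_re]; linarith)
  rw [intervalIntegrable_iff] at h ⊢
  refine (MeasureTheory.IntegrableOn.congr_fun h.re (fun u hu => ?_) measurableSet_uIoc)
  rw [Set.uIoc_of_le zero_le_one] at hu
  rw [← ofReal_rpow_mul_one_sub_rpow ⟨hu.1.le, hu.2⟩]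
  exact Complex.ofReal_re _

lemma integral_rpow_mul_one_sub_rpow (ha : -1 < a) (hb : -1 < b) :
    ∫ u in (0 : ℝ)..1, u ^ a * (1 - u) ^ b =
      Real.Gamma (a + 1) * Real.Gamma (b + 1) / Real.Gamma (a + b + 2) := by
  have h := Complex.betaIntegral_eq_Gamma_mul_div ((a + 1 : ℝ) : ℂ) ((b + 1 : ℝ) : ℂ)
    (by rw [Complex.ofReal_re]; linarith) (by rw [Complex.ofReal_re]; linarith)
  have hcongr : Set.EqOn _ (fun u : ℝ => ((u ^ a * (1 - u) ^ b : ℝ) : ℂ)) (Set.uIcc 0 1) :=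
    fun u hu => (ofReal_rpow_mul_one_sub_rpow (by rwa [Set.uIcc_of_le zero_le_one] at hu) a b).symm
  rw [Complex.betaIntegral, intervalIntegral.integral_congr hcongr,
    intervalIntegral.integral_ofReal, ← Complex.ofReal_add, Complex.Gamma_ofReal,
    Complex.Gamma_ofReal, Complex.Gamma_ofReal] at h
  rw [show a + b + 2 = a + 1 + (b + 1) by ring]
  exact_mod_cast h

lemma integral_pow_mul_one_sub_pow_mul_rpow (ha : -1 < a) (hb : -1 < b) (m l : ℕ) :
    ∫ u in (0 : ℝ)..1, u ^ m * (1 - u) ^ l * (u ^ a * (1 - u) ^ b) =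
      Real.Gamma (a + m + 1) * Real.Gamma (b + l + 1) / Real.Gamma (a + m + (b + l) + 2) := by
  have ham : -1 < a + m := by linarith [m.cast_nonneg (α := ℝ)]
  have hbl : -1 < b + l := by linarith [l.cast_nonneg (α := ℝ)]
  rw [← integral_rpow_mul_one_sub_rpow ham hbl]
  refine intervalIntegral.integral_congr_Ioo_of_le zero_le_one fun u hu => ?_
  rw [Real.rpow_add_natCast hu.1.ne', Real.rpow_add_natCast (sub_pos.2 hu.2).ne']
  ring

lemma intervalIntegrable_mul_rpow_mul_one_sub_rpow (ha : -1 < a) (hb : -1 < b) {f : ℝ → ℝ}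
    (hf : Continuous f) :
    IntervalIntegrable (fun u : ℝ => f u * (u ^ a * (1 - u) ^ b)) MeasureTheory.volume 0 1 :=
  (intervalIntegrable_rpow_mul_one_sub_rpow ha hb).continuousOn_mul hf.continuousOn

lemma integral_mul_one_sub_rpow_mul_one_add_rpow (f : ℝ → ℝ) (a b : ℝ) :
    ∫ x in (-1 : ℝ)..1, f x * (1 - x) ^ a * (1 + x) ^ b =
      2 ^ (a + b + 1) * ∫ u in (0 : ℝ)..1, f (1 - 2 * u) * (u ^ a * (1 - u) ^ b) := by
  have hsubst := intervalIntegral.mul_integral_comp_sub_mul (a := 0) (b := 1)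
    (f := fun x => f x * (1 - x) ^ a * (1 + x) ^ b) 2 1
  norm_num at hsubst
  rw [← hsubst, ← intervalIntegral.integral_const_mul, ← intervalIntegral.integral_const_mul]
  refine intervalIntegral.integral_congr fun u hu => ?_
  rw [Set.uIcc_of_le zero_le_one] at hu
  rw [show 1 + (1 - 2 * u) = 2 * (1 - u) by ring, Real.mul_rpow two_pos.le hu.1,
    Real.mul_rpow two_pos.le (sub_nonneg.2 hu.2), Real.rpow_add_one two_ne_zero,
    Real.rpow_add two_pos]
  ring

end Beta

section Norm

lemma fwdDiff_iter_eval_eq_factorial_mul_coeff {R : Type*} [CommRing R] {f : R[X]} {n : ℕ}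
    (hf : f.natDegree ≤ n) (x : R) :
    (fwdDiff 1)^[n] f.eval x = n.factorial * f.coeff n := by
  rcases hf.eq_or_lt with rfl | hlt
  · rw [fwdDiff_iter_degree_eq_factorial]
    simp [mul_comm]
  · rw [fwdDiff_iter_eq_zero_of_degree_lt hlt, coeff_eq_zero_of_natDegree_lt hlt]
    simp

lemma sum_range_neg_one_pow_mul_choose_mul_eval {R : Type*} [CommRing R] {f : R[X]} {n : ℕ}
    (hf : f.natDegree ≤ n) (x : R) :
    ∑ s ∈ range (n + 1), (-1) ^ s * (n.choose s : R) * f.eval (x + s) =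
      (-1) ^ n * n.factorial * f.coeff n := by
  rw [mul_assoc, ← fwdDiff_iter_eval_eq_factorial_mul_coeff hf x, fwdDiff_iter_eq_sum_shift,
    mul_sum]
  refine sum_congr rfl fun s hs => ?_
  have hs := mem_range_succ_iff.1 hs
  have hsign : (-1 : R) ^ s = (-1) ^ n * (-1) ^ (n - s) := by
    have hns : n + (n - s) = s + 2 * (n - s) := by lia
    rw [← pow_add, hns, pow_add, pow_mul, neg_one_sq, one_pow, mul_one]
  rw [hsign]
  simp [zsmul_eq_mul, mul_assoc]

variable {α β : ℝ} {n : ℕ}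

lemma jacobiCoeff_mul_beta (hα : -1 < α) (hβ : -1 < β) {s : ℕ} (hs : s ≤ n) (m : ℕ) :
    jacobiCoeff α β n s * (Real.Gamma (α + (m + s : ℕ) + 1) * Real.Gamma (β + (n - s : ℕ) + 1) /
        Real.Gamma (α + (m + s : ℕ) + (β + (n - s : ℕ)) + 2)) =
      Real.Gamma (n + α + 1) * Real.Gamma (n + β + 1) /
          (n.factorial * Real.Gamma (n + m + α + β + 2)) *
        (n.choose s * (ascPochhammer ℝ m).eval (α + 1 + s)) := by
  have hα_pos : 0 < α + s + 1 := by linarith [s.cast_nonneg (α := ℝ)]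
  have hβ_pos : 0 < ((n - s : ℕ) : ℝ) + β + 1 := by linarith [(n - s).cast_nonneg (α := ℝ)]
  have hΓα := (Real.Gamma_pos_of_pos hα_pos).ne'
  have hΓβ := (Real.Gamma_pos_of_pos hβ_pos).ne'
  rw [jacobiCoeff, Real.Gamma_nat_eq_factorial, ← Nat.cast_sub hs, Real.Gamma_nat_eq_factorial,
    Nat.cast_choose ℝ hs, show α + (m + s : ℕ) + 1 = α + s + 1 + m by push_cast; ring,
    gamma_add_natCast hΓα, show α + 1 + (s : ℝ) = α + s + 1 by ring,
    show β + ((n - s : ℕ) : ℝ) + 1 = (n - s : ℕ) + β + 1 by ring,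
    show α + (m + s : ℕ) + (β + ((n - s : ℕ) : ℝ)) + 2 = n + m + α + β + 2 by
      rw [Nat.cast_sub hs]; push_cast; ring]
  field_simp

lemma integral_pow_mul_shiftedJacobiP (hα : -1 < α) (hβ : -1 < β) {m : ℕ} (hm : m ≤ n) :
    ∫ u in (0 : ℝ)..1, u ^ m * (shiftedJacobiP α β n).eval (-u) * (u ^ α * (1 - u) ^ β) =
      Real.Gamma (n + α + 1) * Real.Gamma (n + β + 1) / Real.Gamma (n + m + α + β + 2) *
        ((-1) ^ n * (ascPochhammer ℝ m).coeff n) := by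
  have hexpand (u : ℝ) : u ^ m * (shiftedJacobiP α β n).eval (-u) * (u ^ α * (1 - u) ^ β) =
      ∑ s ∈ range (n + 1), (-1) ^ s * jacobiCoeff α β n s *
        (u ^ (m + s) * (1 - u) ^ (n - s) * (u ^ α * (1 - u) ^ β)) := by
    rw [shiftedJacobiP_eq_sum, eval_finsetSum, mul_sum, sum_mul]
    refine sum_congr rfl fun s _ => ?_
    simp only [eval_mul, eval_C, eval_pow, eval_X, eval_add, eval_one]
    rw [neg_pow, neg_add_eq_sub]
    ring
  simp only [hexpand]
  rw [intervalIntegral.integral_finsetSum fun s _ =>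
    (intervalIntegrable_mul_rpow_mul_one_sub_rpow hα hβ (by fun_prop)).const_mul _]
  simp only [intervalIntegral.integral_const_mul, integral_pow_mul_one_sub_pow_mul_rpow hα hβ]
  have hdeg : (ascPochhammer ℝ m).natDegree ≤ n := by rwa [ascPochhammer_natDegree]
  have halt := sum_range_neg_one_pow_mul_choose_mul_eval hdeg (α + 1)
  calc
    _ = ∑ s ∈ range (n + 1), Real.Gamma (n + α + 1) * Real.Gamma (n + β + 1) /
          (n.factorial * Real.Gamma (n + m + α + β + 2)) *
          ((-1) ^ s * n.choose s * (ascPochhammer ℝ m).eval (α + 1 + s)) := by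
      refine sum_congr rfl fun s hs => ?_
      rw [mul_assoc, jacobiCoeff_mul_beta hα hβ (mem_range_succ_iff.1 hs)]
      ring
    _ = _ := by
      rw [← mul_sum, halt]
      field_simp

lemma integral_eval_mul_shiftedJacobiP (hα : -1 < α) (hβ : -1 < β) {f : ℝ[X]}
    (hf : f.natDegree ≤ n) :
    ∫ u in (0 : ℝ)..1, f.eval u * (shiftedJacobiP α β n).eval (-u) * (u ^ α * (1 - u) ^ β) =
      (-1) ^ n * f.coeff n *
        (Real.Gamma (n + α + 1) * Real.Gamma (n + β + 1) / Real.Gamma (2 * n + α + β + 2)) := by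
  have hexpand (u : ℝ) :
      f.eval u * (shiftedJacobiP α β n).eval (-u) * (u ^ α * (1 - u) ^ β) =
        ∑ m ∈ range (n + 1), f.coeff m *
          (u ^ m * (shiftedJacobiP α β n).eval (-u) * (u ^ α * (1 - u) ^ β)) := by
    rw [eval_eq_sum_range' (Nat.lt_succ_of_le hf), sum_mul, sum_mul]
    exact sum_congr rfl fun m _ => by ring
  simp only [hexpand]
  rw [intervalIntegral.integral_finsetSum fun m _ =>
    (intervalIntegrable_mul_rpow_mul_one_sub_rpow hα hβ (by fun_prop)).const_mul _,
    sum_eq_single_of_mem n (self_mem_range_succ n)]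
  · have hlead : (ascPochhammer ℝ n).coeff n = 1 := by
      simpa [ascPochhammer_natDegree] using (monic_ascPochhammer ℝ n).coeff_natDegree
    rw [intervalIntegral.integral_const_mul, integral_pow_mul_shiftedJacobiP hα hβ le_rfl, hlead,
      two_mul]
    ring
  · intro m hm hmn
    have hlt : m < n := (mem_range_succ_iff.1 hm).lt_of_ne hmn
    rw [intervalIntegral.integral_const_mul, integral_pow_mul_shiftedJacobiP hα hβ hlt.le,
      coeff_eq_zero_of_natDegree_lt (p := ascPochhammer ℝ m)
        (by rwa [ascPochhammer_natDegree])]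
    ring

lemma jacobiNormSq_eq_choose_mul (hα : -1 < α) (hβ : -1 < β) (n : ℕ) :
    jacobiNormSq α β n = 2 ^ (α + β + 1) * (Ring.choose (n + α + β + n) n *
      (Real.Gamma (n + α + 1) * Real.Gamma (n + β + 1) / Real.Gamma (2 * n + α + β + 2))) := by
  have hreflect (u : ℝ) : (jacobiP α β n).eval (1 - 2 * u) ^ 2 =
      ((shiftedJacobiP α β n).comp (-X)).eval u * (shiftedJacobiP α β n).eval (-u) := by
    rw [eval_comp, eval_neg, eval_X, eval_shiftedJacobiP, sq]
    ring_nf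
  have hdeg : ((shiftedJacobiP α β n).comp (-X)).natDegree ≤ n := by
    simpa [natDegree_comp] using natDegree_shiftedJacobiP_le α β n
  have hcoeff : ((shiftedJacobiP α β n).comp (-X)).coeff n =
      (-1) ^ n * Ring.choose (n + α + β + n) n := by
    rw [show (-X : ℝ[X]) = C (-1) * X by simp, comp_C_mul_X_coeff,
      coeff_shiftedJacobiP hα hβ le_rfl, Nat.sub_self, Ring.choose_zero_right]
    ring
  rw [jacobiNormSq, integral_mul_one_sub_rpow_mul_one_add_rpow]
  simp only [hreflect]
  rw [integral_eval_mul_shiftedJacobiP hα hβ hdeg, hcoeff, ← mul_assoc ((-1) ^ n),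
    ← mul_pow, neg_mul_neg, one_mul, one_pow, one_mul]

lemma jacobiNormSq_eq_gamma (hα : -1 < α) (hβ : -1 < β) (hn : n ≠ 0) :
    jacobiNormSq α β n = 2 ^ (α + β + 1) / (2 * n + (α + β + 1)) *
      (Real.Gamma (n + α + 1) * Real.Gamma (n + β + 1) /
        (n.factorial * Real.Gamma (n + (α + β) + 1))) := by
  have hn : (1 : ℝ) ≤ n := by exact_mod_cast Nat.one_le_iff_ne_zero.2 hn
  have hpos : 0 < 2 * (n : ℝ) + (α + β + 1) := by linarith
  have hΓ := (Real.Gamma_pos_of_pos hpos).ne'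
  have harg : (n : ℝ) + α + β + n - n + 1 = n + (α + β) + 1 := by ring
  have hΓ' : Real.Gamma (n + α + β + n - n + 1) ≠ 0 :=
    (Real.Gamma_pos_of_pos (by linarith)).ne'
  rw [jacobiNormSq_eq_choose_mul hα hβ, choose_eq_gamma_div hΓ', harg,
    show (n : ℝ) + α + β + n + 1 = 2 * n + (α + β + 1) by ring,
    show 2 * (n : ℝ) + α + β + 2 = 2 * n + (α + β + 1) + 1 by ring, Real.Gamma_add_one hpos.ne']
  field_simp

lemma isEquivalent_jacobiNormSq (hα : -1 < α) (hβ : -1 < β) :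
    jacobiNormSq α β ~[atTop] fun n : ℕ => (2 : ℝ) ^ (α + β) / n := by
  have hlin : (fun n : ℕ => 2 * (n : ℝ) + (α + β + 1)) ~[atTop] fun n : ℕ => 2 * (n : ℝ) :=
    IsEquivalent.refl.add_isLittleO (isLittleO_const_left.2 (Or.inr (tendsto_norm_atTop_atTop.comp
      (tendsto_natCast_atTop_atTop.const_mul_atTop two_pos))))
  have hΓ := ((isEquivalent_gamma_natCast_add_add_one α).mul
    (isEquivalent_gamma_natCast_add_add_one β)).div
    ((IsEquivalent.refl (u := fun n : ℕ => (n.factorial : ℝ))).mul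
      (isEquivalent_gamma_natCast_add_add_one (α + β)))
  have h := ((IsEquivalent.refl (u := fun _ : ℕ => (2 : ℝ) ^ (α + β + 1))).div hlin).mul hΓ
  refine (h.congr_left ?_).congr_right ?_
  · filter_upwards [eventually_ne_atTop 0] with n hn
    rw [jacobiNormSq_eq_gamma hα hβ hn]
    rfl
  · filter_upwards [eventually_gt_atTop 0] with n hn
    have hn : (0 : ℝ) < n := by exact_mod_cast hn
    simp only [Pi.mul_apply, Pi.div_apply]
    rw [Real.rpow_add hn, Real.rpow_add_one two_ne_zero]
    field_simp

end Norm

section Kernel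

variable {α β : ℝ}

lemma kernK_one_one_eq_sum_range {n : ℕ} (hn : n ≠ 0) (j k : ℕ) :
    kernK α β j k (n - 1) 1 1 = ∑ i ∈ range n, (derivative^[j] (jacobiP α β i)).eval 1 *
      (derivative^[k] (jacobiP α β i)).eval 1 / jacobiNormSq α β i := by
  rw [kernK, Nat.sub_one_add_one hn]

lemma isEquivalent_kernK_one_one (hα : -1 < α) (hβ : -1 < β) (j k : ℕ) :
    (fun n => kernK α β j k (n - 1) 1 1) ~[atTop] fun n : ℕ =>
      derivOneConst α j * derivOneConst α k / 2 ^ (α + β) / (2 * (α + j + k + 1)) *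
        (n : ℝ) ^ (2 * (α + j + k + 1)) := by
  have hp : 0 < 2 * (α + j + k + 1) := by
    linarith [j.cast_nonneg (α := ℝ), k.cast_nonneg (α := ℝ)]
  have hc : derivOneConst α j * derivOneConst α k / 2 ^ (α + β) ≠ 0 := by
    have := derivOneConst_pos hα j
    have := derivOneConst_pos hα k
    positivity
  have hterm := ((isEquivalent_iterate_derivative_jacobiP_eval_one hα hβ j).mul
    (isEquivalent_iterate_derivative_jacobiP_eval_one hα hβ k)).div
    (isEquivalent_jacobiNormSq hα hβ)
  refine (isEquivalent_sum_range_of_isEquivalent_rpow hc hp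
    (hterm.congr_right ?_)).congr_left ?_
  · filter_upwards [eventually_gt_atTop 0] with n hn
    have hn : (0 : ℝ) < n := by exact_mod_cast hn
    simp only [Pi.mul_apply, Pi.div_apply]
    rw [show 2 * (α + j + k + 1) - 1 = α + 2 * j + (α + 2 * k) + 1 by ring,
      Real.rpow_add_one hn.ne', Real.rpow_add hn (α + 2 * j)]
    field_simp
  · filter_upwards [eventually_ne_atTop 0] with n hn
    exact (kernK_one_one_eq_sum_range hn j k).symm

/-- The constant `A` in `K_{n-1}^{(j,j)}(1,1) ∼ n^{2(α+2j+1)} / A`. It is the value of the limit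
mass `M` at which `M_n K_{n-1}^{(j,j)}(1,1) → 1`. -/
noncomputable def criticalMass (α β : ℝ) (j : ℕ) : ℝ :=
  Real.Gamma (α + j + 1) ^ 2 * (2 : ℝ) ^ (α + β + 2 * (j : ℝ) + 1) * (α + 2 * j + 1)

lemma criticalMass_pos (hα : -1 < α) (β : ℝ) (j : ℕ) : 0 < criticalMass α β j := by
  have hΓ : 0 < Real.Gamma (α + j + 1) :=
    Real.Gamma_pos_of_pos (by linarith [j.cast_nonneg (α := ℝ)])
  have hp : 0 < α + 2 * j + 1 := by linarith [j.cast_nonneg (α := ℝ)]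
  rw [criticalMass]
  positivity

lemma derivOneConst_sq_div (hα : -1 < α) (β : ℝ) (j : ℕ) :
    derivOneConst α j ^ 2 / 2 ^ (α + β) = 2 * (α + 2 * j + 1) / criticalMass α β j := by
  have hΓ : 0 < Real.Gamma (α + j + 1) :=
    Real.Gamma_pos_of_pos (by linarith [j.cast_nonneg (α := ℝ)])
  have hp : 0 < α + 2 * j + 1 := by linarith [j.cast_nonneg (α := ℝ)]
  have hpow : (2 : ℝ) ^ (α + β + 2 * (j : ℝ) + 1) = 2 ^ (α + β) * (2 ^ j) ^ 2 * 2 := by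
    rw [Real.rpow_add_one two_ne_zero, ← pow_mul, mul_comm j, ← Real.rpow_add_natCast two_ne_zero]
    push_cast
    rfl
  rw [derivOneConst, criticalMass, hpow]
  generalize α + 2 * (j : ℝ) + 1 = p at hp ⊢
  field_simp

lemma isEquivalent_kernK_one_one_self (hα : -1 < α) (hβ : -1 < β) (j : ℕ) :
    (fun n => kernK α β j j (n - 1) 1 1) ~[atTop] fun n : ℕ =>
      1 / criticalMass α β j * (n : ℝ) ^ (2 * (α + 2 * j + 1)) := by
  have hp : 0 < α + 2 * j + 1 := by linarith [j.cast_nonneg (α := ℝ)]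
  have h := isEquivalent_kernK_one_one hα hβ j j
  rw [← sq, derivOneConst_sq_div hα, show α + j + j + 1 = α + 2 * j + 1 by ring] at h
  refine h.congr_right (Eventually.of_forall fun n => ?_)
  field_simp

lemma isEquivalent_iterate_derivative_mul_kernK_div (hα : -1 < α) (hβ : -1 < β) (j k : ℕ) :
    (fun n => (derivative^[j] (jacobiP α β n)).eval 1 * kernK α β j k (n - 1) 1 1 /
        (derivative^[k] (jacobiP α β n)).eval 1) ~[atTop] fun n : ℕ =>
      (α + 2 * j + 1) / ((α + j + k + 1) * criticalMass α β j) *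
        (n : ℝ) ^ (2 * (α + 2 * j + 1)) := by
  have hk := (derivOneConst_pos hα k).ne'
  have h := ((isEquivalent_iterate_derivative_jacobiP_eval_one hα hβ j).mul
    (isEquivalent_kernK_one_one hα hβ j k)).div
    (isEquivalent_iterate_derivative_jacobiP_eval_one hα hβ k)
  refine h.congr_right ?_
  filter_upwards [eventually_gt_atTop 0] with n hn
  have hn : (0 : ℝ) < n := by exact_mod_cast hn
  have hpow : (n : ℝ) ^ (α + 2 * (j : ℝ)) * n ^ (2 * (α + j + k + 1)) =
      n ^ (2 * (α + 2 * j + 1)) * n ^ (α + 2 * (k : ℝ)) := by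
    rw [← Real.rpow_add hn, ← Real.rpow_add hn]
    ring_nf
  have hnk := (Real.rpow_pos_of_pos hn (α + 2 * k)).ne'
  simp only [Pi.mul_apply, Pi.div_apply]
  calc
    _ = derivOneConst α j ^ 2 / 2 ^ (α + β) / (2 * (α + j + k + 1)) *
          ((n : ℝ) ^ (α + 2 * (j : ℝ)) * n ^ (2 * (α + j + k + 1)) / n ^ (α + 2 * (k : ℝ))) := by
      field_simp
    _ = _ := by
      rw [hpow, mul_div_cancel_right₀ _ hnk, derivOneConst_sq_div hα]
      field_simp

end Kernel

section Sobolev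

variable {α β : ℝ} {j k n : ℕ} {Ms : ℕ → ℝ}

lemma iterate_derivative_kernKPoly_eval_one :
    (derivative^[k] (kernKPoly α β j n)).eval 1 = kernK α β j k n 1 1 := by
  rw [kernKPoly, iterate_derivative_sum, eval_finsetSum, kernK]
  refine sum_congr rfl fun i _ => ?_
  rw [iterate_derivative_C_mul, eval_mul, eval_C, div_mul_eq_mul_div]

lemma iterate_derivative_sobQ_eval_one_div (hP : (derivative^[k] (jacobiP α β n)).eval 1 ≠ 0) :
    (derivative^[k] (sobQ α β j Ms n)).eval 1 / (derivative^[k] (jacobiP α β n)).eval 1 =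
      1 - Ms n * ((derivative^[j] (jacobiP α β n)).eval 1 * kernK α β j k (n - 1) 1 1 /
          (derivative^[k] (jacobiP α β n)).eval 1) / (1 + Ms n * kernK α β j j (n - 1) 1 1) := by
  rw [sobQ, iterate_derivative_sub, iterate_derivative_C_mul, eval_sub, eval_mul, eval_C,
    iterate_derivative_kernKPoly_eval_one, sub_div, div_self hP]
  ring

lemma tendsto_mul_of_isEquivalent_const_mul {ι : Type*} {l : Filter ι} {m f g : ι → ℝ}
    {M c : ℝ} (hm : Tendsto (fun i => m i * g i) l (𝓝 M)) (hf : f ~[l] fun i => c * g i) :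
    Tendsto (fun i => m i * f i) l (𝓝 (M * c)) := by
  refine ((IsEquivalent.refl (u := m)).mul hf).symm.tendsto_nhds ((hm.mul_const c).congr ?_)
  intro i
  simp only [Pi.mul_apply]
  ring

end Sobolev

end JacobiSobolev

open JacobiSobolev in
theorem sobQ_deriv_ratio_critical_gamma_general {α β : ℝ} (hα : -1 < α) (hβ : -1 < β) (j k : ℕ)
    {M : ℝ} (hM : M + criticalMass α β j ≠ 0) {Ms : ℕ → ℝ}
    (hlim : Tendsto (fun n : ℕ => Ms n * (n : ℝ) ^ (2 * (α + 2 * j + 1))) atTop (nhds M)) :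
    Tendsto
      (fun n : ℕ => (derivative^[k] (sobQ α β j Ms n)).eval 1 /
        (derivative^[k] (jacobiP α β n)).eval 1)
      atTop
      (nhds ((M * ((k : ℝ) - j) + criticalMass α β j * (α + j + k + 1)) /
        ((α + j + k + 1) * (M + criticalMass α β j)))) := by
  set A := criticalMass α β j
  have hA : 0 < A := criticalMass_pos hα β j
  have hjk : 0 < α + j + k + 1 := by linarith [j.cast_nonneg (α := ℝ), k.cast_nonneg (α := ℝ)]
  have hden_ne : 1 + M * (1 / A) ≠ 0 := by
    rw [mul_one_div, one_add_div hA.ne', add_comm]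
    exact div_ne_zero hM hA.ne'
  have hnum := tendsto_mul_of_isEquivalent_const_mul hlim
    (isEquivalent_iterate_derivative_mul_kernK_div hα hβ j k)
  have hden := (tendsto_mul_of_isEquivalent_const_mul hlim
    (isEquivalent_kernK_one_one_self hα hβ j)).const_add 1
  have hθ : 1 - M * ((α + 2 * j + 1) / ((α + j + k + 1) * A)) / (1 + M * (1 / A)) =
      (M * ((k : ℝ) - j) + A * (α + j + k + 1)) / ((α + j + k + 1) * (M + A)) := by
    have hA1 : 1 + M * (1 / A) = (M + A) / A := by field_simp; ring
    rw [hA1]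
    field_simp
    ring
  rw [← hθ]
  refine ((hnum.div hden hden_ne).const_sub 1).congr' ?_
  filter_upwards [eventually_iterate_derivative_jacobiP_eval_one_ne_zero hα hβ k] with n hn
  exact (iterate_derivative_sobQ_eval_one_div hn).symm

/-- limit of `Q_n^{(k)}(1)/(P_n^{(α,β)})^{(k)}(1)` when `γ = 2(α+2j+1)`. -/
theorem sobQ_deriv_ratio_critical_gamma (α β : ℝ) (hα : -1 < α) (hβ : -1 < β) (j : ℕ)
    (γ M : ℝ) (hM : 0 < M) (Ms : ℕ → ℝ) (hMs : ∀ n, 0 ≤ Ms n)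
    (hlim : Filter.Tendsto (fun n : ℕ => Ms n * (n : ℝ) ^ γ) Filter.atTop (nhds M))
    (hγ : γ = 2 * (α + 2 * j + 1)) (k : ℕ) :
    Filter.Tendsto
      (fun n : ℕ => (Polynomial.derivative^[k] (sobQ α β j Ms n)).eval 1 /
        (Polynomial.derivative^[k] (jacobiP α β n)).eval 1)
      Filter.atTop
      (nhds ((M * ((k : ℝ) - j) +
          Real.Gamma (α + j + 1) ^ 2 * (2 : ℝ) ^ (α + β + 2 * (j : ℝ) + 1) *
            (α + 2 * j + 1) * (α + j + k + 1)) /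
        ((α + j + k + 1) *
          (M + Real.Gamma (α + j + 1) ^ 2 * (2 : ℝ) ^ (α + β + 2 * (j : ℝ) + 1) *
            (α + 2 * j + 1))))) := by
  subst hγ
  exact sobQ_deriv_ratio_critical_gamma_general hα hβ j k
    (add_pos hM (JacobiSobolev.criticalMass_pos hα β j)).ne' hlim
end
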